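/- arXiv:2105.07056 — 2 statements merged into one kernel-verified Lean document; each statement's English description precedes it below -/
import Mathlib

section
/- For every integer s ≥ 1 there exists a constant c > 0, depending only on s, such that for every 2π-periodic function f : ℝ → ℂ of class C^{s+1} and every even integer N ≥ 2 (with h = 2π/N), the trapezoid-rule error satisfies |h Σ_{j=−N/2+1}^{N/2} f(α_j) − ∫_{−π}^{π} f(α) dα| ≤ c h^{s+1} ‖f‖_{s+1}. -/
open scoped BigOperators
open Finset

noncomputable section

/-- Grid spacing `h = 2π/N`. -/
def hgrid (N : ℤ) : ℝ := 2 * Real.pi / N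

/-- Grid points `α_j = j h`. -/
def gridPt (N : ℤ) (j : ℤ) : ℝ := j * hgrid N

/-- Index set `{-N/2+1, …, N/2}`. -/
def idxs (N : ℤ) : Finset ℤ := Finset.Icc (-(N / 2) + 1) (N / 2)

/-- Discrete Fourier coefficient `f̂_k`. -/
def dft (N : ℤ) (f : ℤ → ℂ) (k : ℤ) : ℂ :=
  (N : ℂ)⁻¹ * ∑ j ∈ idxs N, f j * Complex.exp (-(Complex.I * (k : ℂ) * (gridPt N j : ℂ)))

/-- Reconstruction of a discrete function from Fourier coefficients. -/
def idft (N : ℤ) (c : ℤ → ℂ) (j : ℤ) : ℂ :=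
  ∑ k ∈ idxs N, c k * Complex.exp (Complex.I * (k : ℂ) * (gridPt N j : ℂ))

/-- The pseudo-spectral derivative `S_h`. -/
def Sh (N : ℤ) (f : ℤ → ℂ) : ℤ → ℂ :=
  idft N fun k => if k = N / 2 then 0 else Complex.I * (k : ℂ) * dft N f k

/-- The pseudo-spectral antiderivative `S_h⁻¹`. -/
def Shinv (N : ℤ) (f : ℤ → ℂ) : ℤ → ℂ :=
  idft N fun k => if k = 0 then 0 else dft N f k / (Complex.I * (k : ℂ))

/-- The filtered discrete function `f^p`. -/
def filterP (N : ℤ) (ρ : ℝ → ℝ) (f : ℤ → ℂ) : ℤ → ℂ :=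
  idft N fun k => (ρ (gridPt N k) : ℂ) * dft N f k

/-- The filtered derivative `D_h`. -/
def Dh (N : ℤ) (ρ : ℝ → ℝ) (f : ℤ → ℂ) : ℤ → ℂ :=
  idft N fun k => Complex.I * (k : ℂ) * (ρ (gridPt N k) : ℂ) * dft N f k

/-- Discrete `l²` norm. -/
def l2norm (N : ℤ) (f : ℤ → ℂ) : ℝ :=
  Real.sqrt (hgrid N * ∑ j ∈ idxs N, ‖f j‖ ^ 2)

/-- Discrete Hilbert transform `H_h`. -/
def Hh (N : ℤ) (f : ℤ → ℂ) (i : ℤ) : ℂ :=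
  ((hgrid N / Real.pi : ℝ) : ℂ) *
    ∑ j ∈ (idxs N).filter (fun j => Odd (j - i)),
      f j * (Real.cot ((gridPt N i - gridPt N j) / 2) : ℂ)

/-- Discrete inner product `(f,g)_h`. -/
def dip (N : ℤ) (f g : ℤ → ℂ) : ℂ :=
  (hgrid N : ℂ) * ∑ j ∈ idxs N, (starRingEnd ℂ) (f j) * g j

/-- Discrete mean `⟨f⟩_h`. -/
def dmean (N : ℤ) (f : ℤ → ℂ) : ℂ :=
  (N : ℂ)⁻¹ * ∑ j ∈ idxs N, f j

/-- The discrete function of samples of a periodic function. -/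
def samples (N : ℤ) (f : ℝ → ℂ) : ℤ → ℂ := fun j => f (gridPt N j)

/-- Fourier coefficient of a `2π`-periodic function. -/
def fourierCoeffP (f : ℝ → ℂ) (k : ℤ) : ℂ :=
  ((2 * Real.pi)⁻¹ : ℝ) * ∫ α in (-Real.pi)..Real.pi, f α * Complex.exp (-(Complex.I * (k : ℂ) * (α : ℂ)))

/-- Sobolev norm `‖f‖_s`. -/
def sobolevNorm (s : ℕ) (f : ℝ → ℂ) : ℝ :=
  Real.sqrt (∑' k : ℤ, (1 + (k : ℝ) ^ 2) ^ s * ‖fourierCoeffP f k‖ ^ 2)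

/-- A filter (cutoff) function for numerical filtering. -/
structure IsFilter (ρ : ℝ → ℝ) : Prop where
  even : ∀ x, ρ (-x) = ρ x
  nonneg : ∀ x, 0 ≤ ρ x
  smooth : ∃ r : ℕ, 2 < r ∧ ContDiff ℝ r ρ
  zero_at_pi : ρ Real.pi = 0
  zero_at_neg_pi : ρ (-Real.pi) = 0
  deriv_zero_at_pi : deriv ρ Real.pi = 0
  deriv_zero_at_neg_pi : deriv ρ (-Real.pi) = 0
  one_near_zero : ∃ μ : ℝ, 0 < μ ∧ μ < 1 ∧ ∀ x : ℝ, |x| ≤ μ * Real.pi → ρ x = 1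

/-- The continuous function on the circle `ℝ / 2πℤ` induced by a continuous periodic function. -/
def circleLift (f : ℝ → ℂ) (hper : Function.Periodic f (2 * Real.pi)) (hf : Continuous f) :
    C(AddCircle (2 * Real.pi), ℂ) :=
  ⟨hper.lift, hf.quotient_liftOn' _⟩

theorem fourierCoeff_circleLift (f : ℝ → ℂ) (hper : Function.Periodic f (2 * Real.pi))
    (hf : Continuous f) [Fact (0 < 2 * Real.pi)] (k : ℤ) :
    fourierCoeff (circleLift f hper hf) k = fourierCoeffP f k := by
  rw [fourierCoeff_eq_intervalIntegral _ _ (-Real.pi), fourierCoeffP,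
    show -Real.pi + 2 * Real.pi = Real.pi by ring, one_div, Complex.real_smul]
  congr 1
  refine intervalIntegral.integral_congr fun x _ => ?_
  have hx : circleLift f hper hf (x : AddCircle (2 * Real.pi)) = f x := rfl
  simp only [hx, fourier_coe_apply, smul_eq_mul]
  rw [mul_comm]
  congr 2
  have := Real.pi_ne_zero
  push_cast
  field_simp

theorem summable_sq_fourierCoeffP {f : ℝ → ℂ} (hper : Function.Periodic f (2 * Real.pi))
    (hf : Continuous f) : Summable fun k => ‖fourierCoeffP f k‖ ^ 2 := by
  have : Fact (0 < 2 * Real.pi) := ⟨Real.two_pi_pos⟩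
  simpa only [fourierCoeff_toLp, fourierCoeff_circleLift] using
    (hasSum_sq_fourierCoeff
      (ContinuousMap.toLp (E := ℂ) 2 AddCircle.haarAddCircle ℂ (circleLift f hper hf))).summable

theorem hasSum_fourierCoeffP {f : ℝ → ℂ} (hper : Function.Periodic f (2 * Real.pi))
    (hf : Continuous f) (hsum : Summable (fourierCoeffP f)) (x : ℝ) :
    HasSum (fun k : ℤ => fourierCoeffP f k * Complex.exp (Complex.I * k * x)) (f x) := by
  have : Fact (0 < 2 * Real.pi) := ⟨Real.two_pi_pos⟩
  have hsum' : Summable (fourierCoeff (circleLift f hper hf)) :=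
    hsum.congr fun k => (fourierCoeff_circleLift f hper hf k).symm
  have key := has_pointwise_sum_fourier_series_of_summable hsum' (x : AddCircle (2 * Real.pi))
  have hx : circleLift f hper hf (x : AddCircle (2 * Real.pi)) = f x := rfl
  rw [hx] at key
  refine key.congr_fun fun k => ?_
  rw [fourierCoeff_circleLift, fourier_coe_apply, smul_eq_mul]
  congr 2
  have := Real.pi_ne_zero
  push_cast
  field_simp

theorem fourierCoeffP_deriv {f : ℝ → ℂ} (hper : Function.Periodic f (2 * Real.pi))
    (hf : ContDiff ℝ 1 f) (k : ℤ) :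
    fourierCoeffP (deriv f) k = Complex.I * k * fourierCoeffP f k := by
  have hexp : ∀ x : ℝ, HasDerivAt (fun α : ℝ => Complex.exp (-(Complex.I * k * α)))
      (Complex.exp (-(Complex.I * k * x)) * -(Complex.I * k)) x := fun x => by
    simpa using (((hasDerivAt_id (x : ℂ)).const_mul (Complex.I * k)).neg.cexp).comp_ofReal
  have hparts := intervalIntegral.integral_mul_deriv_eq_deriv_mul
    (a := -Real.pi) (b := Real.pi)
    (fun x _ => (hf.differentiable one_ne_zero x).hasDerivAt) (fun x _ => hexp x)
    ((hf.continuous_deriv le_rfl).intervalIntegrable _ _)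
    (Continuous.intervalIntegrable (by fun_prop) _ _)
  have hfpi : f Real.pi = f (-Real.pi) := by
    rw [← hper (-Real.pi)]
    congr 1
    ring
  have hexpi : Complex.exp (-(Complex.I * k * (Real.pi : ℝ))) =
      Complex.exp (-(Complex.I * k * (-Real.pi : ℝ))) := by
    rw [Complex.exp_eq_exp_iff_exists_int]
    refine ⟨-k, ?_⟩
    push_cast
    ring
  rw [hfpi, hexpi, sub_self, zero_sub] at hparts
  simp only [← mul_assoc, intervalIntegral.integral_mul_const] at hparts
  simp only [fourierCoeffP]
  linear_combination (((2 * Real.pi)⁻¹ : ℝ) : ℂ) * hparts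

theorem summable_pow_mul_sq_fourierCoeffP (m : ℕ) {f : ℝ → ℂ}
    (hper : Function.Periodic f (2 * Real.pi)) (hf : ContDiff ℝ m f) :
    Summable fun k : ℤ => ((k : ℝ) ^ 2) ^ m * ‖fourierCoeffP f k‖ ^ 2 := by
  induction m generalizing f with
  | zero => simpa using summable_sq_fourierCoeffP hper hf.continuous
  | succ m ih =>
    have hper' : Function.Periodic (deriv f) (2 * Real.pi) := fun x => by
      rw [← deriv_comp_add_const, hper.funext]
    have hd : ContDiff ℝ m (deriv f) := by
      have := hf
      push_cast at this
      exact (contDiff_succ_iff_deriv.1 this).2.2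
    refine (ih hper' hd).congr fun k => ?_
    rw [fourierCoeffP_deriv hper (hf.of_le (by norm_cast; omega))]
    simp only [norm_mul, Complex.norm_I, Complex.norm_intCast, one_mul, mul_pow, sq_abs]
    ring

theorem summable_sobolev (m : ℕ) {f : ℝ → ℂ}
    (hper : Function.Periodic f (2 * Real.pi)) (hf : ContDiff ℝ m f) :
    Summable fun k : ℤ => (1 + (k : ℝ) ^ 2) ^ m * ‖fourierCoeffP f k‖ ^ 2 := by
  refine .of_nonneg_of_le (fun k => by positivity) (fun k => ?_)
    (((summable_sq_fourierCoeffP hper hf.continuous).add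
      (summable_pow_mul_sq_fourierCoeffP m hper hf)).mul_left (2 ^ (m - 1)))
  have := add_pow_le (zero_le_one' ℝ) (sq_nonneg (k : ℝ)) m
  calc _ ≤ (2 ^ (m - 1) * (1 ^ m + ((k : ℝ) ^ 2) ^ m)) * ‖fourierCoeffP f k‖ ^ 2 := by gcongr
    _ = _ := by ring

theorem summable_fourierCoeffP {f : ℝ → ℂ} (hper : Function.Periodic f (2 * Real.pi))
    (hf : ContDiff ℝ 1 f) : Summable (fourierCoeffP f) := by
  have hinv : Summable fun k : ℤ => 1 / (k : ℝ) ^ 2 :=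
    Real.summable_one_div_int_pow.2 one_lt_two
  have hpow := summable_pow_mul_sq_fourierCoeffP 1 hper (by exact_mod_cast hf)
  refine Summable.of_norm_bounded_eventually (hinv.add hpow) ?_
  filter_upwards [(Set.finite_singleton (0 : ℤ)).compl_mem_cofinite] with k hk
  have hk0 : (k : ℝ) ≠ 0 := Int.cast_ne_zero.2 hk
  have := two_mul_le_add_sq (1 / (k : ℝ)) (k * ‖fourierCoeffP f k‖)
  have hmul : 1 / (k : ℝ) * (k * ‖fourierCoeffP f k‖) = ‖fourierCoeffP f k‖ := by field_simp
  rw [mul_assoc, hmul, mul_pow, one_div_pow] at this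
  have := norm_nonneg (fourierCoeffP f k)
  simp only [pow_one]
  linarith

theorem sum_idxs_zpow {N : ℤ} (hN : 0 < N) (hev : Even N) {z : ℂ} (hz : z ≠ 0) (hz1 : z ≠ 1)
    (hzN : z ^ N = 1) : ∑ j ∈ idxs N, z ^ j = 0 := by
  obtain ⟨M, rfl⟩ := hev
  have hM : (M + M) / 2 = M := by omega
  have hshift : ∑ j ∈ idxs (M + M), z ^ j =
      ∑ i ∈ Finset.range (M + M).toNat, z ^ (1 - M) * z ^ i := by
    refine Finset.sum_bij' (fun j _ => (j + M - 1).toNat) (fun i _ => (i : ℤ) + 1 - M)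
      ?_ ?_ ?_ ?_ ?_
    all_goals simp only [idxs, hM, Finset.mem_Icc, Finset.mem_range]
    · intro j hj; omega
    · intro j hj; omega
    · intro j hj; omega
    · intro j hj; omega
    · intro j hj
      rw [← zpow_natCast, ← zpow_add₀ hz]
      congr 1
      omega
  rw [hshift, ← Finset.mul_sum, geom_sum_eq hz1, ← zpow_natCast, Int.toNat_of_nonneg hN.le, hzN]
  simp

theorem hgrid_mul_sum_exp {N : ℤ} (hN : 0 < N) (hev : Even N) (k : ℤ) :
    (hgrid N : ℂ) * ∑ j ∈ idxs N, Complex.exp (Complex.I * k * gridPt N j) =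
      if N ∣ k then 2 * (Real.pi : ℂ) else 0 := by
  have hN0 : (N : ℂ) ≠ 0 := Int.cast_ne_zero.2 hN.ne'
  have hpi : (Real.pi : ℂ) ≠ 0 := Complex.ofReal_ne_zero.2 Real.pi_ne_zero
  have hterm : ∀ j : ℤ, Complex.exp (Complex.I * k * gridPt N j) =
      Complex.exp (Complex.I * k * hgrid N) ^ j := fun j => by
    rw [← Complex.exp_int_mul]
    congr 1
    rw [gridPt]
    push_cast
    ring
  have hone : Complex.exp (Complex.I * k * hgrid N) = 1 ↔ N ∣ k := by
    rw [Complex.exp_eq_one_iff]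
    refine exists_congr fun n => ?_
    rw [← Int.cast_inj (α := ℂ)]
    simp only [hgrid]
    push_cast
    constructor
    · intro h
      field_simp at h
      linear_combination h
    · intro h
      rw [h]
      field_simp
  simp only [hterm]
  split_ifs with hdvd
  · rw [hone.2 hdvd]
    have hcard : (idxs N).card = N.toNat := by
      obtain ⟨M, rfl⟩ := hev
      simp only [idxs, Int.card_Icc]
      omega
    have hcast : ((N.toNat : ℕ) : ℂ) = N := by
      exact_mod_cast congrArg (Int.cast (R := ℂ)) (Int.toNat_of_nonneg hN.le)
    simp only [one_zpow, Finset.sum_const, hcard, nsmul_eq_mul, mul_one, hcast, hgrid]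
    push_cast
    field_simp
  · rw [sum_idxs_zpow hN hev (Complex.exp_ne_zero _) (mt hone.1 hdvd), mul_zero]
    rw [← hterm, Complex.exp_eq_one_iff]
    refine ⟨k, ?_⟩
    rw [gridPt, hgrid]
    push_cast
    field_simp

/-- The aliasing formula: the trapezoid rule sums the Fourier coefficients at multiples of `N`. -/
theorem hasSum_trapezoid {f : ℝ → ℂ} (hper : Function.Periodic f (2 * Real.pi))
    (hf : ContDiff ℝ 1 f) {N : ℤ} (hN : 0 < N) (hev : Even N) :
    HasSum (fun n : ℤ => 2 * (Real.pi : ℂ) * fourierCoeffP f (n * N))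
      ((hgrid N : ℂ) * ∑ j ∈ idxs N, f (gridPt N j)) := by
  have hsum := (hasSum_sum fun j (_ : j ∈ idxs N) => hasSum_fourierCoeffP hper hf.continuous
    (summable_fourierCoeffP hper hf) (gridPt N j)).mul_left (hgrid N : ℂ)
  have hsum' : HasSum (fun k : ℤ => if N ∣ k then 2 * (Real.pi : ℂ) * fourierCoeffP f k else 0)
      ((hgrid N : ℂ) * ∑ j ∈ idxs N, f (gridPt N j)) := by
    refine hsum.congr_fun fun k => ?_
    rw [← Finset.mul_sum, mul_left_comm, hgrid_mul_sum_exp hN hev]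
    split_ifs <;> ring
  have hinj : Function.Injective fun n : ℤ => n * N := mul_left_injective₀ hN.ne'
  rw [← hinj.hasSum_iff] at hsum'
  · simpa [Function.comp_def] using hsum'
  · intro k hk
    refine if_neg fun ⟨n, hn⟩ => hk ⟨n, ?_⟩
    simp [hn, mul_comm]

theorem integral_eq_fourierCoeffP_zero (f : ℝ → ℂ) :
    ∫ α in (-Real.pi)..Real.pi, f α = 2 * (Real.pi : ℂ) * fourierCoeffP f 0 := by
  have hpi : (Real.pi : ℂ) ≠ 0 := Complex.ofReal_ne_zero.2 Real.pi_ne_zero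
  simp only [fourierCoeffP, Int.cast_zero, mul_zero, zero_mul, neg_zero, Complex.exp_zero, mul_one]
  push_cast
  field_simp

/-- Cauchy–Schwarz bound for the aliased Fourier coefficients. -/
theorem tsum_aliased_le {m : ℕ} (hm : 1 ≤ m) {f : ℝ → ℂ}
    (hper : Function.Periodic f (2 * Real.pi)) (hf : ContDiff ℝ m f) {N : ℤ} (hN : 0 < N) :
    (Summable fun n : ℤ => if n = 0 then 0 else ‖fourierCoeffP f (n * N)‖) ∧
    ∑' n : ℤ, (if n = 0 then 0 else ‖fourierCoeffP f (n * N)‖) ≤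
      sobolevNorm m f * (√(∑' n : ℤ, 1 / (n : ℝ) ^ (2 * m)) / (N : ℝ) ^ m) := by
  have hNR : (0 : ℝ) < N := Int.cast_pos.2 hN
  have hinj : Function.Injective fun n : ℤ => n * N := mul_left_injective₀ hN.ne'
  have hsob := summable_sobolev m hper hf
  have hsobN := hsob.comp_injective hinj
  set u : ℤ → ℝ := fun n => |(n * N : ℝ)| ^ m * ‖fourierCoeffP f (n * N)‖ with hu
  set v : ℤ → ℝ := fun n => 1 / |(n * N : ℝ)| ^ m with hv
  have hule : ∀ n : ℤ, u n ^ (2 : ℝ) ≤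
      ((fun k : ℤ => (1 + (k : ℝ) ^ 2) ^ m * ‖fourierCoeffP f k‖ ^ 2) ∘ fun n => n * N) n :=
    fun n => by
      simp only [hu, Real.rpow_two, mul_pow, Function.comp_apply]
      rw [← pow_mul, mul_comm m 2, pow_mul, sq_abs]
      push_cast
      gcongr
      linarith
  have hu2 : Summable fun n => u n ^ (2 : ℝ) :=
    .of_nonneg_of_le (fun n => by positivity) hule hsobN
  have hv2eq : ∀ n : ℤ, v n ^ (2 : ℝ) = 1 / (n : ℝ) ^ (2 * m) * (1 / (N : ℝ) ^ (2 * m)) :=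
    fun n => by
      simp only [hv, Real.rpow_two]
      rw [div_pow, ← pow_mul, mul_comm m 2, pow_mul, sq_abs, one_pow, ← pow_mul, mul_pow,
        one_div_mul_one_div]
  have hv2 : Summable fun n => v n ^ (2 : ℝ) := by
    simp only [hv2eq]
    exact (Real.summable_one_div_int_pow.2 (by omega)).mul_right _
  have huv : ∀ n, u n * v n = if n = 0 then 0 else ‖fourierCoeffP f (n * N)‖ := fun n => by
    split_ifs with hn
    · have : m ≠ 0 := by omega
      simp [hu, hn, this]
    · have : (n : ℝ) * N ≠ 0 := mul_ne_zero (Int.cast_ne_zero.2 hn) hNR.ne'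
      have : |(n : ℝ) * N| ≠ 0 := abs_ne_zero.2 this
      simp only [hu, hv]
      field_simp
  obtain ⟨hs, hle⟩ := Real.summable_and_inner_le_Lp_mul_Lq_tsum_of_nonneg
    Real.HolderConjugate.two_two (fun n => by positivity : ∀ n, 0 ≤ u n)
    (fun n => by positivity : ∀ n, 0 ≤ v n) hu2 hv2
  simp only [huv] at hs hle
  refine ⟨hs, hle.trans ?_⟩
  rw [← Real.sqrt_eq_rpow, ← Real.sqrt_eq_rpow]
  have hvsqrt : √(∑' n, v n ^ (2 : ℝ)) = √(∑' n : ℤ, 1 / (n : ℝ) ^ (2 * m)) / (N : ℝ) ^ m := by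
    simp only [hv2eq]
    rw [tsum_mul_right, mul_one_div, Real.sqrt_div', mul_comm 2 m, pow_mul,
      Real.sqrt_sq (by positivity)]
    positivity
  rw [hvsqrt]
  gcongr
  refine Real.sqrt_le_sqrt ((hu2.tsum_le_tsum hule hsobN).trans ?_)
  exact tsum_comp_le_tsum_of_inj hsob (fun k => by positivity) hinj

/-- Lemma 5.3: spectral accuracy of the trapezoid rule for periodic
functions. -/
theorem trapezoid_rule_accuracy (s : ℕ) (hs : 1 ≤ s) :
    ∃ c : ℝ, 0 < c ∧ ∀ f : ℝ → ℂ, Function.Periodic f (2 * Real.pi) →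
      ContDiff ℝ (s + 1 : ℕ) f →
      ∀ N : ℤ, 2 ≤ N → Even N →
        ‖((hgrid N : ℂ) * ∑ j ∈ idxs N, f (gridPt N j) -
            ∫ α in (-Real.pi)..Real.pi, f α)‖ ≤
          c * hgrid N ^ (s + 1) * sobolevNorm (s + 1) f := by
  have hpi := Real.pi_pos
  set S : ℝ := √(∑' n : ℤ, 1 / (n : ℝ) ^ (2 * (s + 1)))
  refine ⟨2 * Real.pi * (S + 1) / (2 * Real.pi) ^ (s + 1), by positivity, ?_⟩
  intro f hper hf N hN2 hev
  have hN : 0 < N := by omega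
  have hNR : (0 : ℝ) < N := Int.cast_pos.2 hN
  obtain ⟨hsum, hle⟩ := tsum_aliased_le (Nat.le_add_left 1 s) hper hf hN
  have htrap := (hasSum_trapezoid hper (hf.of_le (by norm_cast; omega)) hN hev).sub
    (hasSum_ite_eq (0 : ℤ) (∫ α in (-Real.pi)..Real.pi, f α))
  have hbound := htrap.norm_le_of_bounded (hsum.hasSum.mul_left (2 * Real.pi)) fun n => by
    split_ifs with hn
    · simp [hn, integral_eq_fourierCoeffP_zero]
    · simp [abs_of_pos hpi]
  refine hbound.trans ?_
  have hsob : 0 ≤ sobolevNorm (s + 1) f := Real.sqrt_nonneg _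
  calc _ ≤ 2 * Real.pi * (sobolevNorm (s + 1) f * ((S + 1) / (N : ℝ) ^ (s + 1))) := by
        gcongr
        refine hle.trans ?_
        gcongr
        exact le_add_of_nonneg_right zero_le_one
    _ = _ := by
        rw [hgrid, div_pow]
        field_simp

end
end

section
/- Let N ≥ 2 be an even integer and let f be a discrete function with f̂_0 = f̂_{N/2} = 0. Then the discrete Hilbert transform satisfies: (i) (H_h f)̂_k = −i·sgn(k)·f̂_k for every k ∈ {−N/2+1, …, N/2}; (ii) H_h(H_h f) = −f; and consequently ‖H_h f‖_{l²} = ‖f‖_{l²}. -/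
open scoped BigOperators
open Finset

noncomputable section

/-- The root of unity `e^{iah}`. -/
def gridExp (N a : ℤ) : ℂ := Complex.exp (Complex.I * (a : ℂ) * (hgrid N : ℂ))

lemma gridExp_zero (N : ℤ) : gridExp N 0 = 1 := by
  simp [gridExp]

lemma gridExp_add (N a b : ℤ) : gridExp N (a + b) = gridExp N a * gridExp N b := by
  rw [gridExp, gridExp, gridExp, ← Complex.exp_add]
  push_cast
  ring_nf

lemma conj_gridExp (N a : ℤ) : (starRingEnd ℂ) (gridExp N a) = gridExp N (-a) := by
  simp [gridExp, ← Complex.exp_conj]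

lemma exp_mul_gridPt (N k j : ℤ) :
    Complex.exp (Complex.I * (k : ℂ) * (gridPt N j : ℂ)) = gridExp N (k * j) := by
  rw [gridExp, gridPt]
  push_cast
  ring_nf

lemma exp_neg_mul_gridPt (N k j : ℤ) :
    Complex.exp (-(Complex.I * (k : ℂ) * (gridPt N j : ℂ))) = gridExp N (-(k * j)) := by
  rw [gridExp, gridPt]
  push_cast
  ring_nf

lemma gridExp_eq_one_iff {N : ℤ} (hN : N ≠ 0) (a : ℤ) : gridExp N a = 1 ↔ N ∣ a := by
  have hN' : (N : ℂ) ≠ 0 := by exact_mod_cast hN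
  have hpi : (Real.pi : ℂ) ≠ 0 := by exact_mod_cast Real.pi_ne_zero
  have hI := Complex.I_ne_zero
  rw [gridExp, Complex.exp_eq_one_iff, hgrid]
  push_cast
  refine exists_congr fun n => ?_
  rw [← Int.cast_inj (α := ℂ)]
  push_cast
  constructor
  · intro h
    field_simp at h
    linear_combination h
  · intro h
    rw [h]
    field_simp

lemma gridExp_half_mul {M : ℤ} (hM : M ≠ 0) (m : ℤ) :
    gridExp (2 * M) (M * m) = if Odd m then -1 else 1 := by
  have hsq : gridExp (2 * M) (M * m) * gridExp (2 * M) (M * m) = 1 := by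
    rw [← gridExp_add, gridExp_eq_one_iff (by omega)]
    exact ⟨m, by ring⟩
  have hone : gridExp (2 * M) (M * m) = 1 ↔ Even m := by
    rw [gridExp_eq_one_iff (by omega), mul_comm 2 M, mul_dvd_mul_iff_left hM, even_iff_two_dvd]
  split_ifs with h
  · rcases mul_self_eq_one_iff.mp hsq with h1 | h1
    · exact absurd (hone.mp h1) (Int.not_even_iff_odd.mpr h)
    · exact h1
  · exact hone.mpr (Int.not_odd_iff_even.mp h)

lemma sum_Icc_shift_sub {G : Type*} [AddCommGroup G] (g : ℤ → G) (a : ℤ) (n : ℕ) :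
    ∑ j ∈ Icc a (a + n - 1), (g (j + 1) - g j) = g (a + n) - g a := by
  induction n with
  | zero => simp
  | succ n ih =>
    have hcons : Icc a (a + (n + 1 : ℕ) - 1) = insert (a + n) (Icc a (a + n - 1)) := by
      ext x
      simp only [mem_insert, mem_Icc]
      push_cast
      omega
    rw [hcons, sum_insert (by simp), ih]
    push_cast
    rw [← add_assoc]
    abel

lemma sum_idxs_symm {G : Type*} [AddCommGroup G] (g : ℤ → G) (n : ℕ) :
    ∑ k ∈ idxs (2 * (n + 1)), g k =
      g 0 + g (n + 1) + ∑ k ∈ range n, (g (k + 1) + g (-(k + 1))) := by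
  have hidx : ∀ n : ℕ, idxs (2 * (n + 1)) = insert ((n : ℤ) + 1) (Icc (-(n : ℤ)) n) := by
    intro n
    ext x
    simp only [idxs, mem_insert, mem_Icc]
    omega
  have hIcc : ∑ k ∈ Icc (-(n : ℤ)) n, g k = g 0 + ∑ k ∈ range n, (g (k + 1) + g (-(k + 1))) := by
    induction n with
    | zero => simp
    | succ n ih =>
      have hins : Icc (-((n + 1 : ℕ) : ℤ)) (n + 1 : ℕ) =
          insert ((n : ℤ) + 1) (insert (-((n : ℤ) + 1)) (Icc (-(n : ℤ)) n)) := by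
        ext x
        simp only [mem_insert, mem_Icc]
        push_cast
        omega
      rw [hins, sum_insert, sum_insert, ih, sum_range_succ]
      · abel
      · simp
      · simp only [mem_insert, mem_Icc]
        omega
  rw [hidx, sum_insert (by simp), hIcc]
  abel

lemma card_idxs {N : ℤ} (hN : 0 ≤ N) (hNe : Even N) : ((idxs N).card : ℤ) = N := by
  obtain ⟨M, rfl⟩ := hNe
  rw [idxs, Int.card_Icc]
  omega

/-- Orthogonality of the discrete exponentials. -/
lemma sum_gridExp_mul {N : ℤ} (hN : 0 < N) (hNe : Even N) (a : ℤ) :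
    ∑ j ∈ idxs N, gridExp N (a * j) = if N ∣ a then (N : ℂ) else 0 := by
  split_ifs with h
  · rw [sum_congr rfl fun j _ => (gridExp_eq_one_iff hN.ne' _).mpr (h.mul_right j)]
    have := card_idxs hN.le hNe
    simp only [sum_const, nsmul_eq_mul, mul_one]
    exact_mod_cast congrArg (Int.cast (R := ℂ)) this
  · have hne : gridExp N a - 1 ≠ 0 :=
      sub_ne_zero.mpr fun h1 => h ((gridExp_eq_one_iff hN.ne' a).mp h1)
    have htel := sum_Icc_shift_sub (fun j => gridExp N (a * j)) (-(N / 2) + 1) N.toNat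
    have hidx : Icc (-(N / 2) + 1) (-(N / 2) + 1 + (N.toNat : ℤ) - 1) = idxs N := by
      obtain ⟨M, rfl⟩ := hNe
      rw [idxs]
      congr 1
      omega
    rw [hidx, Int.toNat_of_nonneg hN.le, mul_add a _ N, gridExp_add N _ (a * N),
      (gridExp_eq_one_iff hN.ne' (a * N)).mpr (dvd_mul_left N a), mul_one, sub_self] at htel
    refine (mul_eq_zero.mp ?_).resolve_left hne
    rw [mul_sum, ← htel]
    refine sum_congr rfl fun j _ => ?_
    rw [mul_add, gridExp_add, mul_one]
    ring

lemma dvd_sub_iff_of_mem_idxs {N k l : ℤ} (hNe : Even N) (hk : k ∈ idxs N) (hl : l ∈ idxs N) :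
    N ∣ k - l ↔ k = l := by
  obtain ⟨M, rfl⟩ := hNe
  rw [idxs, mem_Icc] at hk hl
  refine ⟨fun h => sub_eq_zero.mp (Int.eq_zero_of_abs_lt_dvd h ?_), fun h => by simp [h]⟩
  rw [abs_lt]
  omega

lemma sum_gridExp_sub {N k l : ℤ} (hN : 0 < N) (hNe : Even N) (hk : k ∈ idxs N)
    (hl : l ∈ idxs N) :
    ∑ j ∈ idxs N, gridExp N ((k - l) * j) = if k = l then (N : ℂ) else 0 := by
  simp only [sum_gridExp_mul hN hNe, dvd_sub_iff_of_mem_idxs hNe hk hl]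

lemma dft_idft {N : ℤ} (hN : 0 < N) (hNe : Even N) (c : ℤ → ℂ) {k : ℤ} (hk : k ∈ idxs N) :
    dft N (idft N c) k = c k := by
  have hN' : (N : ℂ) ≠ 0 := by exact_mod_cast hN.ne'
  simp only [dft, idft, exp_mul_gridPt, exp_neg_mul_gridPt, sum_mul]
  rw [sum_comm]
  have hterm : ∀ l ∈ idxs N, ∑ j ∈ idxs N, c l * gridExp N (l * j) * gridExp N (-(k * j)) =
      if l = k then c l * N else 0 := by
    intro l hl
    rw [← mul_ite_zero, ← sum_gridExp_sub hN hNe hl hk, mul_sum]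
    refine sum_congr rfl fun j _ => ?_
    rw [mul_assoc, ← gridExp_add]
    ring_nf
  rw [sum_congr rfl hterm, sum_ite_eq' _ k, if_pos hk]
  field_simp

lemma idft_dft {N : ℤ} (hN : 0 < N) (hNe : Even N) (f : ℤ → ℂ) {i : ℤ} (hi : i ∈ idxs N) :
    idft N (dft N f) i = f i := by
  have hN' : (N : ℂ) ≠ 0 := by exact_mod_cast hN.ne'
  simp only [dft, idft, exp_mul_gridPt, exp_neg_mul_gridPt, mul_sum, sum_mul]
  rw [sum_comm]
  have hterm : ∀ j ∈ idxs N,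
      ∑ k ∈ idxs N, (N : ℂ)⁻¹ * (f j * gridExp N (-(k * j))) * gridExp N (k * i) =
        if i = j then (N : ℂ)⁻¹ * f j * N else 0 := by
    intro j hj
    rw [← mul_ite_zero, ← sum_gridExp_sub hN hNe hi hj, mul_sum]
    refine sum_congr rfl fun k _ => ?_
    rw [← mul_assoc, mul_assoc _ (gridExp N _), ← gridExp_add]
    ring_nf
  rw [sum_congr rfl hterm, sum_ite_eq _ i, if_pos hi]
  field_simp

/-- Parseval's identity for the reconstruction `idft`. -/
lemma sum_norm_sq_idft {N : ℤ} (hN : 0 < N) (hNe : Even N) (c : ℤ → ℂ) :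
    ∑ j ∈ idxs N, ‖idft N c j‖ ^ 2 = N * ∑ k ∈ idxs N, ‖c k‖ ^ 2 := by
  have hN' : (N : ℂ) ≠ 0 := by exact_mod_cast hN.ne'
  have hdft : ∀ k ∈ idxs N,
      ∑ j ∈ idxs N, idft N c j * gridExp N (-(k * j)) = N * c k := by
    intro k hk
    rw [← dft_idft hN hNe c hk, dft, mul_inv_cancel_left₀ hN']
    simp only [exp_neg_mul_gridPt]
  have hconj : ∀ j, (starRingEnd ℂ) (idft N c j) =
      ∑ k ∈ idxs N, (starRingEnd ℂ) (c k) * gridExp N (-(k * j)) := by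
    intro j
    simp only [idft, exp_mul_gridPt, map_sum, map_mul, conj_gridExp]
  rw [← Complex.ofReal_inj]
  push_cast
  simp only [← Complex.mul_conj', hconj, mul_sum]
  rw [sum_comm]
  refine sum_congr rfl fun k hk => ?_
  rw [← mul_assoc, ← hdft k hk, sum_mul]
  exact sum_congr rfl fun j _ => by ring

/-- The cotangent kernel of `Hh` as a trigonometric sum. -/
lemma sum_gridExp_sub_gridExp_neg (n : ℕ) (m : ℤ) :
    ∑ k ∈ range n, (gridExp (2 * (n + 1)) ((k + 1) * m) - gridExp (2 * (n + 1)) (-(k + 1) * m)) =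
      if Odd m then 2 * Complex.I * (Real.cot (m * hgrid (2 * (n + 1)) / 2) : ℂ) else 0 := by
  set N : ℤ := 2 * (n + 1) with hN
  have hN0 : N ≠ 0 := by omega
  by_cases hz : gridExp N m = 1
  · have hdvd : N ∣ m := (gridExp_eq_one_iff hN0 m).mp hz
    have hodd : ¬ Odd m := by
      rw [Int.not_odd_iff_even, even_iff_two_dvd]
      exact (Dvd.intro _ hN.symm).trans hdvd
    rw [if_neg hodd]
    refine sum_eq_zero fun k _ => ?_
    rw [(gridExp_eq_one_iff hN0 _).mpr (hdvd.mul_left _),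
      (gridExp_eq_one_iff hN0 _).mpr (hdvd.mul_left _), sub_self]
  · have hz' : gridExp N m - 1 ≠ 0 := sub_ne_zero.mpr hz
    have htel := sum_range_sub
      (fun k : ℕ => gridExp N ((k + 1) * m) + gridExp N (-k * m)) n
    have hneg : gridExp N (-n * m) = gridExp N ((n + 1) * m) * gridExp N m := by
      have h1 : gridExp N (-(N * m)) = 1 := (gridExp_eq_one_iff hN0 _).mpr ⟨-m, by ring⟩
      rw [← gridExp_add, ← mul_one (gridExp N (_ + m)), ← h1, ← gridExp_add, hN]
      ring_nf
    have hprod : (gridExp N m - 1) * ∑ k ∈ range n,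
        (gridExp N ((k + 1) * m) - gridExp N (-(k + 1) * m)) =
        (gridExp N ((n + 1) * m) - 1) * (1 + gridExp N m) := by
      have : (gridExp N ((n + 1) * m) - 1) * (1 + gridExp N m) =
        gridExp N ((n + 1) * m) + gridExp N (-n * m) -
          (gridExp N (((0 : ℕ) + 1) * m) + gridExp N (-(0 : ℕ) * m)) := by
        rw [hneg]
        simp [gridExp_zero]
        ring
      rw [this, ← htel, mul_sum]
      refine sum_congr rfl fun k _ => ?_
      have e1 : (((k + 1 : ℕ) : ℤ) + 1) * m = (k + 1) * m + m := by push_cast; ring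
      have e2 : -(k : ℤ) * m = -(k + 1) * m + m := by ring
      rw [e1, e2, gridExp_add, gridExp_add]
      push_cast
      ring
    have hhalf := gridExp_half_mul (M := n + 1) (by omega) m
    rw [← hN] at hhalf
    rw [hhalf] at hprod
    refine mul_left_cancel₀ hz' (hprod.trans ?_)
    split_ifs with hodd
    · have hexp : Complex.exp (2 * Complex.I * ((m * hgrid N / 2 : ℝ) : ℂ)) = gridExp N m := by
        rw [gridExp]
        push_cast
        ring_nf
      have hz'' : 1 - gridExp N m ≠ 0 := sub_ne_zero.mpr (Ne.symm hz)
      have hI := Complex.I_ne_zero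
      rw [Complex.ofReal_cot, Complex.cot_eq_exp_ratio, hexp]
      field_simp
      ring
    · ring

/-- On functions without Nyquist mode, `Hh` is the Fourier multiplier `-i sgn k`. -/
lemma Hh_eq_idft {N : ℤ} (hN : 0 < N) (hNe : Even N) (f : ℤ → ℂ)
    (hN2 : dft N f (N / 2) = 0) :
    Hh N f = idft N fun k => -Complex.I * (Int.sign k : ℂ) * dft N f k := by
  obtain ⟨n, rfl⟩ : ∃ n : ℕ, N = 2 * (n + 1) := by
    obtain ⟨M, rfl⟩ := hNe
    exact ⟨(M - 1).toNat, by omega⟩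
  have hhalf : 2 * ((n : ℤ) + 1) / 2 = n + 1 := by omega
  rw [hhalf] at hN2
  funext i
  rw [idft, sum_idxs_symm, hN2]
  set N : ℤ := 2 * (n + 1) with hNdef
  have hsign : ∀ k : ℕ, Int.sign ((k : ℤ) + 1) = 1 := fun k => Int.sign_eq_one_of_pos (by omega)
  have hcoef : hgrid N / Real.pi = 2 * (N : ℝ)⁻¹ := by
    rw [hgrid]
    field_simp
  simp only [exp_mul_gridPt]
  simp only [Int.sign_zero, Int.sign_neg, hsign, Int.cast_zero, mul_zero, zero_mul, zero_add,
    Int.cast_neg, Int.cast_one]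
  have hterm : ∀ k ∈ range n,
      -Complex.I * 1 * dft N f (k + 1) * gridExp N ((k + 1) * i) +
        -Complex.I * -1 * dft N f (-(k + 1)) * gridExp N (-(k + 1) * i) =
      ∑ j ∈ idxs N, -Complex.I * (N : ℂ)⁻¹ * f j *
        (gridExp N ((k + 1) * (i - j)) - gridExp N (-(k + 1) * (i - j))) := by
    intro k _
    simp only [dft, exp_neg_mul_gridPt, mul_sum, sum_mul]
    rw [← sum_add_distrib]
    refine sum_congr rfl fun j _ => ?_
    have e1 : ((k : ℤ) + 1) * (i - j) = (k + 1) * i + -((k + 1) * j) := by ring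
    have e2 : -((k : ℤ) + 1) * (i - j) = -(k + 1) * i + -(-(k + 1) * j) := by ring
    rw [e1, e2, gridExp_add, gridExp_add]
    ring
  rw [sum_congr rfl hterm, sum_comm, Hh, sum_filter, mul_sum]
  refine sum_congr rfl fun j _ => ?_
  have hodd : Odd (j - i) ↔ Odd (i - j) := by rw [← neg_sub, odd_neg]
  have hang : (gridPt N i - gridPt N j) / 2 = ((i - j : ℤ) : ℝ) * hgrid N / 2 := by
    rw [gridPt, gridPt]
    push_cast
    ring
  rw [← mul_sum, sum_gridExp_sub_gridExp_neg, ← hNdef, hcoef, hang]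
  simp only [hodd]
  split_ifs
  · generalize Real.cot (((i - j : ℤ) : ℝ) * hgrid N / 2) = c
    push_cast
    linear_combination (2 * (N : ℂ)⁻¹ * f j * c) * Complex.I_sq
  · simp

/-- Lemma 8.3, parts (i), (ii): spectral properties of the discrete
Hilbert transform, and the resulting `l²`-isometry. -/
theorem discrete_hilbert_transform_properties (N : ℤ) (hN : 2 ≤ N) (hNe : Even N)
    (f : ℤ → ℂ) (h0 : dft N f 0 = 0) (hN2 : dft N f (N / 2) = 0) :
    (∀ k ∈ idxs N, dft N (Hh N f) k = -Complex.I * (Int.sign k : ℂ) * dft N f k) ∧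
    (∀ i ∈ idxs N, Hh N (Hh N f) i = -f i) ∧
    l2norm N (Hh N f) = l2norm N f := by
  have hNpos : 0 < N := by omega
  have hzero : (0 : ℤ) ∈ idxs N := by
    rw [idxs, mem_Icc]
    omega
  have hmid : N / 2 ∈ idxs N := by
    rw [idxs, mem_Icc]
    omega
  have hH := Hh_eq_idft hNpos hNe f hN2
  have hdft : ∀ k ∈ idxs N, dft N (Hh N f) k = -Complex.I * (Int.sign k : ℂ) * dft N f k := by
    intro k hk
    rw [hH, dft_idft hNpos hNe _ hk]
  refine ⟨hdft, fun i hi => ?_, ?_⟩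
  · rw [Hh_eq_idft hNpos hNe (Hh N f) (by rw [hdft _ hmid, hN2, mul_zero]),
      ← idft_dft hNpos hNe f hi, idft, idft, ← sum_neg_distrib]
    refine sum_congr rfl fun k hk => ?_
    rw [hdft k hk]
    rcases eq_or_ne k 0 with rfl | hk0
    · simp [h0]
    · have hsq : (Int.sign k : ℂ) * (Int.sign k : ℂ) = 1 := by
        rcases hk0.lt_or_gt with hk | hk
        · simp [Int.sign_eq_neg_one_of_neg hk]
        · simp [Int.sign_eq_one_of_pos hk]
      linear_combination (dft N f k * Complex.exp (Complex.I * k * gridPt N i)) *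
        ((Int.sign k : ℂ) * (Int.sign k : ℂ) * Complex.I_sq - hsq)
  · have hf : ∑ j ∈ idxs N, ‖f j‖ ^ 2 = ∑ j ∈ idxs N, ‖idft N (dft N f) j‖ ^ 2 :=
      sum_congr rfl fun j hj => by rw [idft_dft hNpos hNe f hj]
    rw [l2norm, l2norm, hf, hH, sum_norm_sq_idft hNpos hNe, sum_norm_sq_idft hNpos hNe]
    congr 3
    refine sum_congr rfl fun k _ => ?_
    rcases lt_trichotomy k 0 with hk | rfl | hk
    · simp [Int.sign_eq_neg_one_of_neg hk]
    · simp [h0]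
    · simp [Int.sign_eq_one_of_pos hk]

end
end
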